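/- arXiv:1312.4609 — 2 statements merged into one kernel-verified Lean document; each statement's English description precedes it below -/
import Mathlib

section
/- Let (k, [·,·], K) be a quadratic real Lie algebra, i.e. K is a symmetric, nondegenerate, invariant bilinear form on k (invariance: K([u,v],w) = K(u,[v,w]) for all u,v,w ∈ k). Let k* be the dual of k, with coadjoint action ad*_u defined by ⟨ad*_u η, w⟩ := −⟨η, [u,w]⟩. Set g̃₋₁ := ℝ and g̃₀ := k ⊕ k*, and define: l̃₁ := 0; l̃₂((u,ξ),(v,η)) := ( [u,v], K([u,v],·) + ad*_u η − ad*_v ξ ); l̃₂((u,ξ),r) := 0 for r ∈ ℝ; l̃₃((u,ξ),(v,η),(w,ζ)) := −½K([u,v],w) − ½( ⟨ζ,[u,v]⟩ + ⟨ξ,[v,w]⟩ + ⟨η,[w,u]⟩ ). Then (g̃₀, g̃₋₁, l̃₁, l̃₂, l̃₃) is a 2-term L∞-algebra. -/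
/-- A 2-term L∞-algebra over ℝ. -/
structure TwoTermLinfty (G0 G1 : Type*) [AddCommGroup G0] [Module ℝ G0]
    [AddCommGroup G1] [Module ℝ G1] where
  l1 : G1 →ₗ[ℝ] G0
  l2 : G0 →ₗ[ℝ] G0 →ₗ[ℝ] G0
  l2' : G0 →ₗ[ℝ] G1 →ₗ[ℝ] G1
  l3 : G0 →ₗ[ℝ] G0 →ₗ[ℝ] G0 →ₗ[ℝ] G1
  skew : ∀ x y, l2 x y = - l2 y x
  alt₁ : ∀ x y z, l3 x y z = - l3 y x z
  alt₂ : ∀ x y z, l3 x y z = - l3 x z y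
  ident_a : ∀ x m, l1 (l2' x m) = l2 x (l1 m)
  ident_b : ∀ m n, l2' (l1 m) n = - l2' (l1 n) m
  ident_c : ∀ x y z,
    l2 x (l2 y z) + l2 y (l2 z x) + l2 z (l2 x y) = l1 (l3 x y z)
  ident_d : ∀ x y m,
    l3 x y (l1 m) = l2' x (l2' y m) - l2' y (l2' x m) - l2' (l2 x y) m
  ident_e : ∀ w x y z,
    l3 (l2 w x) y z - l3 (l2 w y) x z + l3 (l2 w z) x y + l3 (l2 x y) w z
      - l3 (l2 x z) w y + l3 (l2 y z) w x
    = l2' w (l3 x y z) - l2' x (l3 w y z) + l2' y (l3 w x z) - l2' z (l3 w x y)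

/-- The coadjoint action: `⟨ad*_u η, w⟩ = −⟨η, [u,w]⟩`. -/
noncomputable def coad {k : Type*} [LieRing k] [LieAlgebra ℝ k] (u : k)
    (η : Module.Dual ℝ k) : Module.Dual ℝ k :=
  -(η ∘ₗ LieAlgebra.ad ℝ k u)

/-!
A Lie algebra with an invariant bilinear form `B` becomes a 2-term L∞-algebra with `l₁ = 0` and
`l₃` any multiple of the Cartan 3-form `B([x,y],z)`: the form is alternating, and identity (e) says
that it is closed.

Invariance makes `K : k → k*` equivariant, so `K([u,v],·)` is the Chevalley–Eilenberg coboundary of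
the 1-cochain `K`. Hence `l̃₂` is the bracket of the extension of `k` by `k*` attached to a
2-cocycle, and the Jacobi identity is `d² = 0`. The pairing `⟨(u,ξ),(v,η)⟩ = ξ(v) + η(u)` is
invariant for this bracket, and `l̃₃` is `-1/2` times its Cartan 3-form.
-/

open LieModule.Cohomology LieAlgebra

section InvariantForm

variable {R L : Type*} [CommRing R] [LieRing L] [LieAlgebra R L] {B : LinearMap.BilinForm R L}

theorem lieInvariant_iff_apply_lie_eq :
    B.lieInvariant L ↔ ∀ x y z : L, B ⁅x, y⁆ z = B x ⁅y, z⁆ := by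
  have apply_lie_skew (x y z : L) : B ⁅y, x⁆ z = -B ⁅x, y⁆ z := by
    rw [← lie_skew, map_neg, LinearMap.neg_apply]
  constructor <;> intro h x y z
  · rw [apply_lie_skew, h, neg_neg]
  · rw [apply_lie_skew, h]

theorem apply_lie_rotate (hB : B.lieInvariant L) (x y z : L) : B ⁅x, y⁆ z = B ⁅y, z⁆ x := by
  rw [hB x y z, lieInvariant_iff_apply_lie_eq.mp hB y z x, ← lie_skew z x, map_neg]

theorem apply_lie_lie_comm (hB : B.lieInvariant L) (w x y z : L) :
    B ⁅w, x⁆ ⁅y, z⁆ = B ⁅y, z⁆ ⁅w, x⁆ := by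
  rw [← lieInvariant_iff_apply_lie_eq.mp hB ⁅y, z⁆ w x, apply_lie_rotate hB ⁅y, z⁆ w x]

theorem lie_apply_eq_apply_lie (hB : B.lieInvariant L) (x y : L) : ⁅x, B y⁆ = B ⁅x, y⁆ := by
  ext z
  rw [Module.Dual.lie_apply, hB]

theorem d₁₂_apply_eq_apply_lie (hB : B.lieInvariant L) (x y : L) :
    d₁₂ R L (Module.Dual R L) B x y = B ⁅x, y⁆ := by
  rw [d₁₂_apply_apply, lie_apply_eq_apply_lie hB, lie_apply_eq_apply_lie hB, ← lie_skew x y,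
    map_neg]
  abel

variable (B) in
/-- The Cartan 3-form `(x, y, z) ↦ B([x,y],z)` of a bilinear form `B` on a Lie algebra, as a
trilinear map; it is alternating and closed when `B` is invariant. -/
def cartanForm : L →ₗ[R] L →ₗ[R] L →ₗ[R] R :=
  (LieModule.toEnd R L L : L →ₗ[R] L →ₗ[R] L).compr₂ B

@[simp]
theorem cartanForm_apply (x y z : L) : cartanForm B x y z = B ⁅x, y⁆ z := rfl

theorem cartanForm_swap_left (x y z : L) : cartanForm B x y z = -cartanForm B y x z := by
  rw [cartanForm_apply, cartanForm_apply, ← lie_skew, map_neg, LinearMap.neg_apply]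

theorem cartanForm_swap_right (hB : B.lieInvariant L) (x y z : L) :
    cartanForm B x y z = -cartanForm B x z y := by
  simp only [cartanForm_apply, lieInvariant_iff_apply_lie_eq.mp hB x]
  rw [← lie_skew, map_neg]

theorem cartanForm_closed (hB : B.lieInvariant L) (w x y z : L) :
    cartanForm B ⁅w, x⁆ y z - cartanForm B ⁅w, y⁆ x z + cartanForm B ⁅w, z⁆ x y
      + cartanForm B ⁅x, y⁆ w z - cartanForm B ⁅x, z⁆ w y + cartanForm B ⁅y, z⁆ w x = 0 := by
  have jacobi : B ⁅w, x⁆ ⁅y, z⁆ - B ⁅w, y⁆ ⁅x, z⁆ + B ⁅w, z⁆ ⁅x, y⁆ = 0 := by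
    simp only [lieInvariant_iff_apply_lie_eq.mp hB w]
    rw [← map_sub, ← map_add, ← lie_lie, ← lie_skew, neg_add_cancel, map_zero]
  simp only [cartanForm_apply, lieInvariant_iff_apply_lie_eq.mp hB ⁅_, _⁆]
  rw [apply_lie_lie_comm hB x y w z, apply_lie_lie_comm hB x z w y, apply_lie_lie_comm hB y z w x]
  linear_combination 2 * jacobi

end InvariantForm

section CocycleExtension

variable {R L M : Type*} [CommRing R] [LieRing L] [LieAlgebra R L]

/-- The coboundary of a Lie algebra 1-cochain, bundled as a 2-cocycle. -/
def coboundaryCocycle [AddCommGroup M] [Module R M] [LieRingModule L M] [LieModule R L M]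
    (f : oneCochain R L M) : twoCocycle R L M :=
  ⟨d₁₂ R L M f, LinearMap.congr_fun (d₂₃_comp_d₁₂ R L M) f⟩

variable (c : twoCocycle R L (Module.Dual R L))

/-- The symmetric pairing `⟨(u,ξ),(v,η)⟩ = ξ(v) + η(u)` on the extension of `L` by its dual
attached to a 2-cocycle. -/
def dualPairing : LinearMap.BilinForm R (ofTwoCocycle c) :=
  let e := (LinearEquiv.prodComm R L (Module.Dual R L)).toLinearMap ∘ₗ
    ((ofProd c).symm.linearEquiv R).toLinearMap
  (LinearMap.dualProd R L).compl₁₂ e e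

theorem dualPairing_ofProd (a b : L × Module.Dual R L) :
    dualPairing c (ofProd c a) (ofProd c b) = a.2 b.1 + b.2 a.1 :=
  add_comm _ _

theorem dualPairing_comm (x y : ofTwoCocycle c) : dualPairing c x y = dualPairing c y x :=
  add_comm _ _

theorem cartanForm_dualPairing_ofProd (a₁ a₂ a₃ : L × Module.Dual R L) :
    cartanForm (dualPairing c) (ofProd c a₁) (ofProd c a₂) (ofProd c a₃) =
      c.1 a₁.1 a₂.1 a₃.1
        + (a₃.2 ⁅a₁.1, a₂.1⁆ + a₁.2 ⁅a₂.1, a₃.1⁆ + a₂.2 ⁅a₃.1, a₁.1⁆) := by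
  rw [cartanForm_apply, bracket_ofTwoCocycle, dualPairing_ofProd, ← lie_skew a₃.1 a₁.1, map_neg]
  simp only [Equiv.symm_apply_apply, twoCochain_val_apply, LinearMap.sub_apply,
    LinearMap.add_apply, Module.Dual.lie_apply]
  ring

theorem dualPairing_lieInvariant (hc : ∀ x y z : L, c.1 x y z = c.1 y z x) :
    (dualPairing c).lieInvariant (ofTwoCocycle c) := by
  refine lieInvariant_iff_apply_lie_eq.mpr fun x y z ↦ ?_
  obtain ⟨a₁, rfl⟩ := (ofProd c).surjective x
  obtain ⟨a₂, rfl⟩ := (ofProd c).surjective y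
  obtain ⟨a₃, rfl⟩ := (ofProd c).surjective z
  rw [dualPairing_comm c (ofProd c a₁), ← cartanForm_apply, ← cartanForm_apply,
    cartanForm_dualPairing_ofProd, cartanForm_dualPairing_ofProd, hc]
  ring

end CocycleExtension

namespace TwoTermLinfty

/-- The 2-term L∞-algebra of string type attached to a real Lie algebra with an invariant form `B`:
the Lie bracket in degree `0`, the trivial module `ℝ` in degree `-1`, and `l₃` equal to `t` times
the Cartan 3-form of `B`. -/
noncomputable def ofInvariantForm {L : Type*} [LieRing L] [LieAlgebra ℝ L]
    (B : LinearMap.BilinForm ℝ L) (hB : B.lieInvariant L) (t : ℝ) : TwoTermLinfty L ℝ where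
  l1 := 0
  l2 := LieModule.toEnd ℝ L L
  l2' := 0
  l3 := t • cartanForm B
  skew x y := (lie_skew x y).symm
  alt₁ x y z := by
    simp only [LinearMap.smul_apply]
    rw [cartanForm_swap_left, smul_neg]
  alt₂ x y z := by
    simp only [LinearMap.smul_apply]
    rw [cartanForm_swap_right hB, smul_neg]
  ident_a x m := by simp
  ident_b m n := by simp
  ident_c x y z := lie_jacobi x y z
  ident_d x y m := by simp
  ident_e w x y z := by
    simpa [← mul_add, ← mul_sub] using Or.inr (cartanForm_closed hB w x y z)

variable {G0 G0' G1 : Type*} [AddCommGroup G0] [Module ℝ G0] [AddCommGroup G0'] [Module ℝ G0']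
  [AddCommGroup G1] [Module ℝ G1]

/-- Transport of a 2-term L∞-algebra along a linear equivalence of its degree `0` part. -/
noncomputable def comap (e : G0' ≃ₗ[ℝ] G0) (T : TwoTermLinfty G0 G1) : TwoTermLinfty G0' G1 where
  l1 := e.symm.toLinearMap ∘ₗ T.l1
  l2 := (T.l2.compl₁₂ e.toLinearMap e.toLinearMap).compr₂ e.symm.toLinearMap
  l2' := T.l2' ∘ₗ e.toLinearMap
  l3 := (T.l3.compl₁₂ e.toLinearMap e.toLinearMap).compr₂ (LinearMap.lcomp ℝ G1 e.toLinearMap)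
  skew x y := by simpa using congrArg e.symm (T.skew (e x) (e y))
  alt₁ x y z := T.alt₁ (e x) (e y) (e z)
  alt₂ x y z := T.alt₂ (e x) (e y) (e z)
  ident_a x m := by simpa using T.ident_a (e x) m
  ident_b m n := by simpa using T.ident_b m n
  ident_c x y z := by simpa using congrArg e.symm (T.ident_c (e x) (e y) (e z))
  ident_d x y m := by simpa using T.ident_d (e x) (e y) m
  ident_e w x y z := by simpa using T.ident_e (e w) (e x) (e y) (e z)

end TwoTermLinfty

theorem coad_eq_lie {k : Type*} [LieRing k] [LieAlgebra ℝ k] (u : k) (η : Module.Dual ℝ k) :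
    coad u η = ⁅u, η⁆ := rfl

theorem quadratic_stringType_twoTermLinfty_general (k : Type*) [LieRing k] [LieAlgebra ℝ k]
    (K : LinearMap.BilinForm ℝ k) (hK : K.lieInvariant k) :
    ∃ T : TwoTermLinfty (k × Module.Dual ℝ k) ℝ,
      (∀ r : ℝ, T.l1 r = 0) ∧
      (∀ a b : k × Module.Dual ℝ k, T.l2 a b =
        (⁅a.1, b.1⁆, K ⁅a.1, b.1⁆ + coad a.1 b.2 - coad b.1 a.2)) ∧
      (∀ (a : k × Module.Dual ℝ k) (r : ℝ), T.l2' a r = 0) ∧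
      (∀ a b c : k × Module.Dual ℝ k, T.l3 a b c =
        -(1/2 : ℝ) • K ⁅a.1, b.1⁆ c.1
          - (1/2 : ℝ) • (c.2 ⁅a.1, b.1⁆ + a.2 ⁅b.1, c.1⁆ + b.2 ⁅c.1, a.1⁆)) := by
  let c := coboundaryCocycle (M := Module.Dual ℝ k) K
  let e := ((ofProd c).symm.linearEquiv ℝ).symm
  have hc (u v : k) : c.1 u v = K ⁅u, v⁆ := d₁₂_apply_eq_apply_lie hK u v
  have pairing_invariant : (dualPairing c).lieInvariant (ofTwoCocycle c) :=
    dualPairing_lieInvariant c fun u v w ↦ by rw [hc, hc, apply_lie_rotate hK]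
  refine ⟨(TwoTermLinfty.ofInvariantForm (dualPairing c) pairing_invariant (-(1 / 2))).comap e,
    fun r ↦ rfl, fun a b ↦ ?_, fun a r ↦ rfl, fun a b d ↦ ?_⟩
  · rw [← hc, coad_eq_lie, coad_eq_lie]
    rfl
  · change -(1 / 2 : ℝ) • cartanForm (dualPairing c) (ofProd c a) (ofProd c b) (ofProd c d) = _
    rw [cartanForm_dualPairing_ofProd, hc, smul_add, neg_smul, neg_smul, ← sub_eq_add_neg]

/-- For a quadratic Lie algebra `(k, [·,·], K)` (`K` symmetric, nondegenerate and
invariant), the data `g̃₋₁ = ℝ`, `g̃₀ = k ⊕ k*`, `l̃₁ = 0`,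
`l̃₂((u,ξ),(v,η)) = ([u,v], K([u,v],·) + ad*_u η − ad*_v ξ)`, `l̃₂((u,ξ),r) = 0`,
`l̃₃((u,ξ),(v,η),(w,ζ)) = −½K([u,v],w) − ½(⟨ζ,[u,v]⟩ + ⟨ξ,[v,w]⟩ + ⟨η,[w,u]⟩)`
is a 2-term L∞-algebra. -/
theorem quadratic_stringType_twoTermLinfty (k : Type*) [LieRing k] [LieAlgebra ℝ k]
    (K : k →ₗ[ℝ] k →ₗ[ℝ] ℝ)
    (hsymm : ∀ u v : k, K u v = K v u)
    (hnondeg : ∀ u : k, (∀ v : k, K u v = 0) → u = 0)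
    (hinv : ∀ u v w : k, K ⁅u, v⁆ w = K u ⁅v, w⁆) :
    ∃ T : TwoTermLinfty (k × Module.Dual ℝ k) ℝ,
      (∀ r : ℝ, T.l1 r = 0) ∧
      (∀ a b : k × Module.Dual ℝ k, T.l2 a b =
        (⁅a.1, b.1⁆, K ⁅a.1, b.1⁆ + coad a.1 b.2 - coad b.1 a.2)) ∧
      (∀ (a : k × Module.Dual ℝ k) (r : ℝ), T.l2' a r = 0) ∧
      (∀ a b c : k × Module.Dual ℝ k, T.l3 a b c =
        -(1/2 : ℝ) • K ⁅a.1, b.1⁆ c.1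
          - (1/2 : ℝ) • (c.2 ⁅a.1, b.1⁆ + a.2 ⁅b.1, c.1⁆ + b.2 ⁅c.1, a.1⁆)) :=
  quadratic_stringType_twoTermLinfty_general k K (lieInvariant_iff_apply_lie_eq.mpr hinv)
end

section
/- Let (k, [·,·]) be a real Lie algebra, gl(k) = End(k) with commutator [A,B] = A∘B − B∘A, and ad_u ∈ gl(k) the adjoint map ad_u(v) = [u,v]. Set g̃₋₁ := k and g̃₀ := k ⊕ gl(k), and define: l̃₁(m) := (m, −ad_m); l̃₂((u,A),m) := ½[u,m] + ½A(m); l̃₂((u,A),(v,B)) := ( [u,v] + ½(A(v) − B(u)), [ad_u,B] + [A,ad_v] + ½(ad_{B(u)} − ad_{A(v)}) + [A,B] ); l̃₃((u,A),(v,B),(w,C)) := −½( C([u,v]) + A([v,w]) + B([w,u]) ) − ¼( [A,B](w) + [B,C](u) + [C,A](v) ) − ¼( [u,B(w)] + [B(u),w] + [v,C(u)] + [C(v),u] + [w,A(v)] + [A(w),v] ). Then (g̃₀, g̃₋₁, l̃₁, l̃₂, l̃₃) is a 2-term L∞-algebra. -/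
/-!
Let `L` be a Lie algebra acting on `M`. Skew-symmetrizing the Leibniz bracket
`(u, A) ∘ (v, B) = (A v, [A, B])` on `M ⊕ L` breaks the Jacobi identity only in the `M`-component,
where the defect is `-¼` times the cyclic sum of `[A, B] w`; this defect is the `l₃` of a 2-term
L∞-algebra with `l₁` the inclusion of `M`. For `L = gl(V)` and `M = V` this is the omni-Lie algebra
of `V`. The deformed structure of the theorem is nothing but the omni-Lie one of `V = k` in the
coordinates `(u, A) ↦ (u, A + ad_u)`: its correction terms come from expanding
`[A + ad_u, B + ad_v]` with the help of `[ad_u, ad_v] = ad_[u,v]`.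
-/

section CyclicSum

variable {R X Y : Type*} [CommSemiring R] [AddCommMonoid X] [Module R X] [AddCommGroup Y]
  [Module R Y]

/-- The trilinear map `(a, b, c) ↦ T b c a`, used to form cyclic sums. -/
def rotateTrilinear (T : X →ₗ[R] X →ₗ[R] X →ₗ[R] Y) : X →ₗ[R] X →ₗ[R] X →ₗ[R] Y :=
  ((LinearMap.lflip (R₀ := R)).toLinearMap ∘ₗ T).flip

/-- The sum of a trilinear map over the cyclic permutations of its arguments. -/
def cyclicSum (T : X →ₗ[R] X →ₗ[R] X →ₗ[R] Y) : X →ₗ[R] X →ₗ[R] X →ₗ[R] Y :=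
  T + rotateTrilinear T + rotateTrilinear (rotateTrilinear T)

theorem cyclicSum_apply (T : X →ₗ[R] X →ₗ[R] X →ₗ[R] Y) (a b c : X) :
    cyclicSum T a b c = T a b c + T b c a + T c a b := rfl

theorem cyclicSum_swap_left {T : X →ₗ[R] X →ₗ[R] X →ₗ[R] Y}
    (hT : ∀ a b c, T a b c = -T b a c) (a b c : X) :
    cyclicSum T a b c = -cyclicSum T b a c := by
  rw [cyclicSum_apply, cyclicSum_apply, hT a b c, hT b c a, hT c a b]
  abel

theorem cyclicSum_swap_right {T : X →ₗ[R] X →ₗ[R] X →ₗ[R] Y}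
    (hT : ∀ a b c, T a b c = -T b a c) (a b c : X) :
    cyclicSum T a b c = -cyclicSum T a c b := by
  rw [cyclicSum_apply, cyclicSum_apply, hT a b c, hT b c a, hT c a b]
  abel

end CyclicSum

section Hemisemidirect

variable (L M : Type*) [LieRing L] [LieAlgebra ℝ L] [AddCommGroup M] [Module ℝ M]
  [LieRingModule L M] [LieModule ℝ L M]

/-- Half the action of the `L`-component on `M`: the mixed bracket `l₂` of the hemisemidirect
product. -/
noncomputable def halfAction : M × L →ₗ[ℝ] M →ₗ[ℝ] M :=
  (1 / 2 : ℝ) • (LieModule.toEnd ℝ L M : L →ₗ[ℝ] Module.End ℝ M) ∘ₗ LinearMap.snd ℝ M L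

/-- The Lie bracket of the `L`-components. -/
def sndBracket : M × L →ₗ[ℝ] M × L →ₗ[ℝ] L :=
  (LieAlgebra.ad ℝ L : L →ₗ[ℝ] Module.End ℝ L).compl₁₂ (LinearMap.snd ℝ M L)
    (LinearMap.snd ℝ M L)

/-- The skew-symmetrization of the hemisemidirect product bracket `(⁅A, v⁆, ⁅A, B⁆)` of
`(u, A)` and `(v, B)`. -/
noncomputable def skewBracket : M × L →ₗ[ℝ] M × L →ₗ[ℝ] M × L :=
  let action := (halfAction L M).compl₂ (LinearMap.fst ℝ M L)
  (action - action.flip).compr₂ (LinearMap.inl ℝ M L) +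
    (sndBracket L M).compr₂ (LinearMap.inr ℝ M L)

/-- The trilinear map `((u, A), (v, B), (w, C)) ↦ ⁅⁅A, B⁆, w⁆`. -/
def bracketAction : M × L →ₗ[ℝ] M × L →ₗ[ℝ] M × L →ₗ[ℝ] M :=
  (sndBracket L M).compr₂
    ((LieModule.toEnd ℝ L M : L →ₗ[ℝ] Module.End ℝ M).compl₂ (LinearMap.fst ℝ M L))

/-- The Jacobiator of `skewBracket`, which takes values in `M`. -/
noncomputable def skewJacobiator : M × L →ₗ[ℝ] M × L →ₗ[ℝ] M × L →ₗ[ℝ] M :=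
  -(1 / 4 : ℝ) • cyclicSum (bracketAction L M)

variable {L M}

theorem halfAction_apply (a : M × L) (m : M) : halfAction L M a m = (1 / 2 : ℝ) • ⁅a.2, m⁆ := rfl

theorem skewBracket_apply (a b : M × L) :
    skewBracket L M a b = ((1 / 2 : ℝ) • (⁅a.2, b.1⁆ - ⁅b.2, a.1⁆), ⁅a.2, b.2⁆) := by
  ext <;> simp [skewBracket, sndBracket, halfAction_apply, smul_sub]

theorem bracketAction_apply (a b c : M × L) : bracketAction L M a b c = ⁅⁅a.2, b.2⁆, c.1⁆ := rfl

theorem bracketAction_swap (a b c : M × L) :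
    bracketAction L M a b c = -bracketAction L M b a c := by
  rw [bracketAction_apply, bracketAction_apply, ← lie_skew, neg_lie]

theorem skewJacobiator_apply (a b c : M × L) :
    skewJacobiator L M a b c =
      -(1 / 4 : ℝ) • (⁅⁅a.2, b.2⁆, c.1⁆ + ⁅⁅b.2, c.2⁆, a.1⁆ + ⁅⁅c.2, a.2⁆, b.1⁆) := rfl

theorem skewBracket_skew (a b : M × L) : skewBracket L M a b = -skewBracket L M b a := by
  simp only [skewBracket_apply, Prod.neg_mk, lie_skew, ← smul_neg, neg_sub]

theorem skewJacobiator_swap_left (a b c : M × L) :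
    skewJacobiator L M a b c = -skewJacobiator L M b a c := by
  simp only [skewJacobiator, LinearMap.smul_apply, ← smul_neg]
  rw [cyclicSum_swap_left bracketAction_swap]

theorem skewJacobiator_swap_right (a b c : M × L) :
    skewJacobiator L M a b c = -skewJacobiator L M a c b := by
  simp only [skewJacobiator, LinearMap.smul_apply, ← smul_neg]
  rw [cyclicSum_swap_right bracketAction_swap]

theorem skewBracket_inl (a : M × L) (m : M) :
    skewBracket L M a (m, 0) = (halfAction L M a m, 0) := by
  simp [skewBracket_apply, halfAction_apply]

theorem skewBracket_jacobi (a b c : M × L) :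
    skewBracket L M a (skewBracket L M b c) + skewBracket L M b (skewBracket L M c a) +
      skewBracket L M c (skewBracket L M a b) = (skewJacobiator L M a b c, 0) := by
  simp only [skewBracket_apply, skewJacobiator_apply, Prod.mk_add_mk, Prod.mk.injEq]
  refine ⟨?_, lie_jacobi a.2 b.2 c.2⟩
  simp only [lie_smul, lie_sub, lie_lie]
  module

theorem skewJacobiator_inl (a b : M × L) (m : M) :
    skewJacobiator L M a b (m, 0) =
      halfAction L M a (halfAction L M b m) - halfAction L M b (halfAction L M a m) -
        halfAction L M (skewBracket L M a b) m := by
  simp only [skewJacobiator_apply, halfAction_apply, skewBracket_apply, lie_zero, zero_lie,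
    lie_smul, lie_lie]
  module

theorem skewJacobiator_coherence (w x y z : M × L) :
    skewJacobiator L M (skewBracket L M w x) y z - skewJacobiator L M (skewBracket L M w y) x z +
        skewJacobiator L M (skewBracket L M w z) x y +
        skewJacobiator L M (skewBracket L M x y) w z -
        skewJacobiator L M (skewBracket L M x z) w y +
        skewJacobiator L M (skewBracket L M y z) w x =
      halfAction L M w (skewJacobiator L M x y z) - halfAction L M x (skewJacobiator L M w y z) +
        halfAction L M y (skewJacobiator L M w x z) -
        halfAction L M z (skewJacobiator L M w x y) := by
  -- Both sides are linear in the `M`-components; the terms in `z.1`, say, add up on either side to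
  -- `-1/8` times the antisymmetrization of `⁅w.2, ⁅x.2, ⁅y.2, z.1⁆⁆⁆` in `w`, `x`, `y`.
  simp only [skewJacobiator_apply, halfAction_apply, skewBracket_apply, lie_smul, lie_add, lie_sub,
    sub_lie, lie_lie]
  module

end Hemisemidirect

namespace TwoTermLinfty

/-- The 2-term L∞-algebra of a Lie module `M` over `L`, living on the hemisemidirect product
`M × L`. For `L = Module.End ℝ V` and `M = V` it is the omni-Lie algebra of `V`. -/
noncomputable def hemisemidirect (L M : Type*) [LieRing L] [LieAlgebra ℝ L] [AddCommGroup M]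
    [Module ℝ M] [LieRingModule L M] [LieModule ℝ L M] : TwoTermLinfty (M × L) M where
  l1 := LinearMap.inl ℝ M L
  l2 := skewBracket L M
  l2' := halfAction L M
  l3 := skewJacobiator L M
  skew := skewBracket_skew
  alt₁ := skewJacobiator_swap_left
  alt₂ := skewJacobiator_swap_right
  ident_a a m := (skewBracket_inl a m).symm
  ident_b m n := by simp [halfAction_apply]
  ident_c := skewBracket_jacobi
  ident_d := skewJacobiator_inl
  ident_e := skewJacobiator_coherence

/-- Transport of a 2-term L∞-algebra along a linear equivalence of the degree 0 part. -/
noncomputable def comapEquiv {G H V : Type*} [AddCommGroup G] [Module ℝ G] [AddCommGroup H]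
    [Module ℝ H] [AddCommGroup V] [Module ℝ V] (T : TwoTermLinfty H V) (e : G ≃ₗ[ℝ] H) :
    TwoTermLinfty G V where
  l1 := e.symm.toLinearMap ∘ₗ T.l1
  l2 := (T.l2.compl₁₂ e.toLinearMap e.toLinearMap).compr₂ e.symm.toLinearMap
  l2' := T.l2' ∘ₗ e.toLinearMap
  l3 := (T.l3.compl₁₂ e.toLinearMap e.toLinearMap).compr₂ (LinearMap.lcomp ℝ V e.toLinearMap)
  skew x y := (congrArg e.symm (T.skew (e x) (e y))).trans (map_neg e.symm _)
  alt₁ x y z := T.alt₁ (e x) (e y) (e z)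
  alt₂ x y z := T.alt₂ (e x) (e y) (e z)
  ident_a x m := by simp [T.ident_a]
  ident_b m n := by simpa using T.ident_b m n
  ident_c x y z := by simp [← T.ident_c]
  ident_d x y m := by simpa using T.ident_d (e x) (e y) m
  ident_e w x y z := by simpa using T.ident_e (e w) (e x) (e y) (e z)

/-- The hemisemidirect 2-term L∞-algebra in the coordinates `(u, A) ↦ (u, A + f u)`. -/
noncomputable def shearedHemisemidirect {L M : Type*} [LieRing L] [LieAlgebra ℝ L]
    [AddCommGroup M] [Module ℝ M] [LieRingModule L M] [LieModule ℝ L M] (f : M →ₗ[ℝ] L) :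
    TwoTermLinfty (M × L) M :=
  (hemisemidirect L M).comapEquiv
    ((LinearEquiv.refl ℝ M).skewProd (LinearEquiv.refl ℝ L) f)

section Sheared

variable {L M : Type*} [LieRing L] [LieAlgebra ℝ L] [AddCommGroup M] [Module ℝ M]
  [LieRingModule L M] [LieModule ℝ L M] (f : M →ₗ[ℝ] L)

theorem shearedHemisemidirect_l1 (m : M) : (shearedHemisemidirect f).l1 m = (m, -f m) := by
  simp [shearedHemisemidirect, comapEquiv, hemisemidirect]

theorem shearedHemisemidirect_l2' (a : M × L) (m : M) :
    (shearedHemisemidirect f).l2' a m = (1 / 2 : ℝ) • ⁅a.2 + f a.1, m⁆ := rfl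

theorem shearedHemisemidirect_l2 (a b : M × L) :
    (shearedHemisemidirect f).l2 a b =
      ((1 / 2 : ℝ) • (⁅a.2 + f a.1, b.1⁆ - ⁅b.2 + f b.1, a.1⁆),
        ⁅a.2 + f a.1, b.2 + f b.1⁆ -
          f ((1 / 2 : ℝ) • (⁅a.2 + f a.1, b.1⁆ - ⁅b.2 + f b.1, a.1⁆))) := by
  simp [shearedHemisemidirect, comapEquiv, hemisemidirect, skewBracket_apply]

theorem shearedHemisemidirect_l3 (a b c : M × L) :
    (shearedHemisemidirect f).l3 a b c =
      -(1 / 4 : ℝ) • (⁅⁅a.2 + f a.1, b.2 + f b.1⁆, c.1⁆ + ⁅⁅b.2 + f b.1, c.2 + f c.1⁆, a.1⁆ +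
        ⁅⁅c.2 + f c.1, a.2 + f a.1⁆, b.1⁆) := rfl

end Sheared

end TwoTermLinfty

section AdjointShear

open LieAlgebra

attribute [local instance] LieRing.ofAssociativeRing

theorem lie_lie_cyclic_eq_zero {L : Type*} [LieRing L] (x y z : L) :
    ⁅⁅x, y⁆, z⁆ + ⁅⁅y, z⁆, x⁆ + ⁅⁅z, x⁆, y⁆ = 0 := by
  rw [← lie_skew ⁅x, y⁆ z, ← lie_skew ⁅y, z⁆ x, ← lie_skew ⁅z, x⁆ y, ← neg_add, ← neg_add,
    lie_jacobi z x y, neg_zero]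

section LieAddAd

variable {R k : Type*} [CommRing R] [LieRing k] [LieAlgebra R k]

theorem lie_add_ad_add_ad (A B : Module.End R k) (u v : k) :
    ⁅A + ad R k u, B + ad R k v⁆ =
      ad R k ⁅u, v⁆ + (ad R k u * B - B * ad R k u) + (A * ad R k v - ad R k v * A) +
        (A * B - B * A) := by
  rw [(ad R k).map_lie, Ring.lie_def, Ring.lie_def]
  noncomm_ring

theorem lie_add_ad_add_ad_apply (A B : Module.End R k) (u v w : k) :
    ⁅⁅A + ad R k u, B + ad R k v⁆, w⁆ =
      ⁅⁅u, v⁆, w⁆ + (A ⁅v, w⁆ + B ⁅w, u⁆) + (A * B - B * A) w + (⁅u, B w⁆ + ⁅A w, v⁆) := by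
  rw [lie_add_ad_add_ad, ← lie_skew w u, ← lie_skew (A w) v]
  simp only [Module.End.lie_apply, LinearMap.add_apply, LinearMap.sub_apply, Module.End.mul_apply,
    ad_apply, map_neg]
  abel

end LieAddAd

variable {k : Type*} [LieRing k] [LieAlgebra ℝ k]

theorem half_smul_lie_add_ad_sub (A B : Module.End ℝ k) (u v : k) :
    (1 / 2 : ℝ) • (⁅A + ad ℝ k u, v⁆ - ⁅B + ad ℝ k v, u⁆) =
      ⁅u, v⁆ + (1 / 2 : ℝ) • (A v - B u) := by
  simp only [Module.End.lie_apply, LinearMap.add_apply, ad_apply, ← lie_skew v u]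
  module

namespace TwoTermLinfty

variable (k) in
/-- The omni-Lie algebra of `k` deformed by the bracket of `k`: on `k ⊕ gl(k)` the coordinate
`A` of the omni-Lie algebra is replaced by `A + ad_u`. -/
noncomputable def deformedOmniLie : TwoTermLinfty (k × Module.End ℝ k) k :=
  shearedHemisemidirect (ad ℝ k : k →ₗ[ℝ] Module.End ℝ k)

theorem deformedOmniLie_l1 (m : k) : (deformedOmniLie k).l1 m = (m, -ad ℝ k m) :=
  shearedHemisemidirect_l1 _ m

theorem deformedOmniLie_l2' (a : k × Module.End ℝ k) (m : k) :
    (deformedOmniLie k).l2' a m = (1 / 2 : ℝ) • ⁅a.1, m⁆ + (1 / 2 : ℝ) • a.2 m := by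
  rw [deformedOmniLie, shearedHemisemidirect_l2', ← smul_add, add_comm ⁅a.1, m⁆]
  rfl

theorem deformedOmniLie_l2 (a b : k × Module.End ℝ k) :
    (deformedOmniLie k).l2 a b =
      (⁅a.1, b.1⁆ + (1 / 2 : ℝ) • (a.2 b.1 - b.2 a.1),
        (ad ℝ k a.1 * b.2 - b.2 * ad ℝ k a.1) + (a.2 * ad ℝ k b.1 - ad ℝ k b.1 * a.2) +
          (1 / 2 : ℝ) • (ad ℝ k (b.2 a.1) - ad ℝ k (a.2 b.1)) + (a.2 * b.2 - b.2 * a.2)) := by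
  simp only [deformedOmniLie, shearedHemisemidirect_l2, LieHom.coe_toLinearMap,
    half_smul_lie_add_ad_sub, lie_add_ad_add_ad, map_add, map_smul, map_sub, Prod.mk.injEq,
    true_and]
  module

theorem deformedOmniLie_l3 (a b c : k × Module.End ℝ k) :
    (deformedOmniLie k).l3 a b c =
      -(1 / 2 : ℝ) • (c.2 ⁅a.1, b.1⁆ + a.2 ⁅b.1, c.1⁆ + b.2 ⁅c.1, a.1⁆)
        - (1 / 4 : ℝ) • ((a.2 * b.2 - b.2 * a.2) c.1 + (b.2 * c.2 - c.2 * b.2) a.1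
            + (c.2 * a.2 - a.2 * c.2) b.1)
        - (1 / 4 : ℝ) • (⁅a.1, b.2 c.1⁆ + ⁅b.2 a.1, c.1⁆ + ⁅b.1, c.2 a.1⁆
            + ⁅c.2 b.1, a.1⁆ + ⁅c.1, a.2 b.1⁆ + ⁅a.2 c.1, b.1⁆) := by
  simp only [deformedOmniLie, shearedHemisemidirect_l3, LieHom.coe_toLinearMap,
    lie_add_ad_add_ad_apply]
  linear_combination (norm := module) (-(1 / 4) : ℝ) • lie_lie_cyclic_eq_zero a.1 b.1 c.1

end TwoTermLinfty

end AdjointShear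

/-- Example 4.12 of Lang–Sheng–Xu: the 2-term L∞-algebra obtained from the 2-term
L∞-algebra `(k →^{Id} k, l₂ = [·,·], l₃ = 0)` of a Lie algebra `k`, with
`g̃₋₁ = k`, `g̃₀ = k ⊕ gl(k)`, `l̃₁(m) = (m, −ad_m)`,
`l̃₂((u,A),m) = ½[u,m] + ½Am`,
`l̃₂((u,A),(v,B)) = ([u,v] + ½(Av − Bu),
  [ad_u,B] + [A,ad_v] + ½(ad_{Bu} − ad_{Av}) + [A,B])`, and
`l̃₃((u,A),(v,B),(w,C)) = −½(C[u,v] + A[v,w] + B[w,u]) − ¼([A,B]w + [B,C]u + [C,A]v)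
  − ¼([u,Bw] + [Bu,w] + [v,Cu] + [Cv,u] + [w,Av] + [Aw,v])`. -/
theorem deformed_omniLie_twoTermLinfty (k : Type*) [LieRing k] [LieAlgebra ℝ k] :
    ∃ T : TwoTermLinfty (k × Module.End ℝ k) k,
      (∀ m : k, T.l1 m = (m, -(LieAlgebra.ad ℝ k m))) ∧
      (∀ (a : k × Module.End ℝ k) (m : k),
        T.l2' a m = (1/2 : ℝ) • ⁅a.1, m⁆ + (1/2 : ℝ) • a.2 m) ∧
      (∀ a b : k × Module.End ℝ k, T.l2 a b =
        (⁅a.1, b.1⁆ + (1/2 : ℝ) • (a.2 b.1 - b.2 a.1),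
         (LieAlgebra.ad ℝ k a.1 * b.2 - b.2 * LieAlgebra.ad ℝ k a.1)
           + (a.2 * LieAlgebra.ad ℝ k b.1 - LieAlgebra.ad ℝ k b.1 * a.2)
           + (1/2 : ℝ) • (LieAlgebra.ad ℝ k (b.2 a.1) - LieAlgebra.ad ℝ k (a.2 b.1))
           + (a.2 * b.2 - b.2 * a.2))) ∧
      (∀ a b c : k × Module.End ℝ k, T.l3 a b c =
        -(1/2 : ℝ) • (c.2 ⁅a.1, b.1⁆ + a.2 ⁅b.1, c.1⁆ + b.2 ⁅c.1, a.1⁆)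
          - (1/4 : ℝ) • ((a.2 * b.2 - b.2 * a.2) c.1 + (b.2 * c.2 - c.2 * b.2) a.1
              + (c.2 * a.2 - a.2 * c.2) b.1)
          - (1/4 : ℝ) • (⁅a.1, b.2 c.1⁆ + ⁅b.2 a.1, c.1⁆ + ⁅b.1, c.2 a.1⁆
              + ⁅c.2 b.1, a.1⁆ + ⁅c.1, a.2 b.1⁆ + ⁅a.2 c.1, b.1⁆)) :=
  ⟨.deformedOmniLie k, TwoTermLinfty.deformedOmniLie_l1, TwoTermLinfty.deformedOmniLie_l2',
    TwoTermLinfty.deformedOmniLie_l2, TwoTermLinfty.deformedOmniLie_l3⟩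
end
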